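/- Suppose X contains a chain of length greater than 1, and fix x < y in X with x not minimal. Let β = δ + e_{xy}. Then β is a unit of I(X,K) and the inner automorphism ξ_β : f ↦ βfβ⁻¹ is a Lie algebra automorphism of I(X,K) which is not a Hom-Lie structure on I(X,K): indeed, for any u < x one has [[e_y,e_u],ξ_β(e_{ux})] + [[e_u,e_{ux}],ξ_β(e_y)] + [[e_{ux},e_y],ξ_β(e_u)] = e_{uy} ≠ 0. -/

import Mathlib

open IncidenceAlgebra

attribute [local instance 100] LieRing.ofAssociativeRing

/-- The Hom-Jacobi identity for a map `φ` on a Lie ring. -/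
def HomJacobi {A : Type*} [LieRing A] (φ : A → A) : Prop :=
  ∀ a b c : A, ⁅⁅a, b⁆, φ c⁆ + ⁅⁅b, c⁆, φ a⁆ + ⁅⁅c, a⁆, φ b⁆ = 0

/-- `φ` is a regular Hom-Lie structure: a Lie algebra automorphism satisfying Hom-Jacobi. -/
def IsRegHomLie (K : Type*) {A : Type*} [CommRing K] [LieRing A] [LieAlgebra K A]
    (φ : A → A) : Prop :=
  (∃ e : A ≃ₗ⁅K⁆ A, ⇑e = φ) ∧ HomJacobi φ

/-- The "matrix unit" `e_{xy}` of the incidence algebra, for `x ≤ y`. -/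
def eSingle (K : Type*) [Field K] {X : Type*} [PartialOrder X] [DecidableEq X]
    (x y : X) (_h : x ≤ y) : IncidenceAlgebra K X where
  toFun u v := if u = x ∧ v = y then 1 else 0
  eq_zero_of_not_le' u v huv := by
    split_ifs with h'
    · exact absurd (by rw [h'.1, h'.2]; exact _h) huv
    · rfl

/-- The multiplicative map `M_σ` on the incidence algebra: `(M_σ f)(x,y) = σ(x,y) f(x,y)`. -/
def Mmul (K : Type*) [Field K] {X : Type*} [PartialOrder X]
    (σ : X → X → K) (f : IncidenceAlgebra K X) : IncidenceAlgebra K X where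
  toFun u v := σ u v * f u v
  eq_zero_of_not_le' u v huv := by
    rw [apply_eq_zero_of_not_le huv f, mul_zero]

/-- The conjugation map `ξ_β : f ↦ β f β⁻¹`. -/
noncomputable def xiMap {K : Type*} [Field K] {X : Type*} [PartialOrder X] [DecidableEq X]
    [LocallyFiniteOrder X] (β : IncidenceAlgebra K X) :
    IncidenceAlgebra K X → IncidenceAlgebra K X :=
  fun f => β * f * Ring.inverse β

/-- `l(x,y)`: the maximal length of a chain from `x` to `y`. -/
noncomputable def chainLen {X : Type*} [PartialOrder X] (x y : X) : ℕ :=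
  sSup {n : ℕ | ∃ c : Fin (n + 1) → X, StrictMono c ∧ c 0 = x ∧ c (Fin.last n) = y}

/-- `J^m`: the `K`-span of the `e_{xy}` with `x < y` and `l(x,y) ≥ m`. -/
noncomputable def Jpow (K : Type*) [Field K] {X : Type*} [PartialOrder X] [DecidableEq X]
    (m : ℕ) : Submodule K (IncidenceAlgebra K X) :=
  Submodule.span K {f | ∃ x y, ∃ h : x < y, m ≤ chainLen x y ∧ f = eSingle K x y h.le}

/-!
Let `u < x < y`. As `x ≠ y`, the element `e_{xy}` squares to zero, so `δ + e_{xy}` is a unit with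
inverse `δ - e_{xy}`, and conjugation by it sends `e_y` to `e_y + e_{xy}`. Both `e_u` and `e_{ux}`
commute with `e_y`, so only the middle term of the Hom-Jacobi sum at `(e_y, e_u, e_{ux})` survives,
namely `[e_{ux}, e_y + e_{xy}] = [e_{ux}, e_{xy}] = e_{uy}`.
-/

theorem ringInverse_one_add_of_mul_self_eq_zero {R : Type*} [Ring R] {a : R} (ha : a * a = 0) :
    Ring.inverse (1 + a) = 1 - a := by
  have mul_eq_one : (1 + a) * (1 - a) = 1 := by simp [mul_sub, add_mul, ha]
  have mul_eq_one' : (1 - a) * (1 + a) = 1 := by simp [sub_mul, mul_add, ha]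
  exact Ring.inverse_unit ⟨1 + a, 1 - a, mul_eq_one, mul_eq_one'⟩

section MatrixUnits

variable {K : Type*} [Field K] {X : Type*} [PartialOrder X] [DecidableEq X]

theorem eSingle_apply {x y : X} (hxy : x ≤ y) (u v : X) :
    eSingle K x y hxy u v = if u = x ∧ v = y then 1 else 0 :=
  rfl

theorem eSingle_ne_zero {x y : X} (hxy : x ≤ y) : eSingle K x y hxy ≠ 0 := by
  intro h
  have apply_eq_zero : eSingle K x y hxy x y = 0 := by rw [h, IncidenceAlgebra.zero_apply]
  simp [eSingle_apply] at apply_eq_zero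

variable [LocallyFiniteOrder X]

theorem eSingle_mul_eSingle {x y z : X} (hxy : x ≤ y) (hyz : y ≤ z) :
    eSingle K x y hxy * eSingle K y z hyz = eSingle K x z (hxy.trans hyz) := by
  ext u v _
  simp only [mul_apply, eSingle_apply]
  rw [Finset.sum_eq_single y (fun w _ hw ↦ by simp [hw])]
  · simp [← ite_and, and_comm]
  · intro hy
    have endpoints_ne : ¬(v = z ∧ u = x) := by
      rintro ⟨rfl, rfl⟩
      exact hy (Finset.mem_Icc.2 ⟨hxy, hyz⟩)
    simpa using endpoints_ne

theorem eSingle_mul_eSingle_of_ne {x y z w : X} (hxy : x ≤ y) (hzw : z ≤ w) (hyz : y ≠ z) :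
    eSingle K x y hxy * eSingle K z w hzw = 0 := by
  ext u v _
  simp only [mul_apply, eSingle_apply, IncidenceAlgebra.zero_apply]
  refine Finset.sum_eq_zero fun t _ ↦ ?_
  by_cases ht : t = y <;> simp [ht, hyz]

theorem lie_eSingle_eSingle {x y z : X} (hxy : x ≤ y) (hyz : y ≤ z) (hxz : x ≠ z) :
    ⁅eSingle K x y hxy, eSingle K y z hyz⁆ = eSingle K x z (hxy.trans hyz) := by
  rw [Ring.lie_def, eSingle_mul_eSingle, eSingle_mul_eSingle_of_ne _ _ hxz.symm, sub_zero]

theorem lie_eSingle_eSingle_of_ne {x y z w : X} (hxy : x ≤ y) (hzw : z ≤ w) (hyz : y ≠ z)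
    (hwx : w ≠ x) : ⁅eSingle K x y hxy, eSingle K z w hzw⁆ = 0 := by
  rw [Ring.lie_def, eSingle_mul_eSingle_of_ne _ _ hyz, eSingle_mul_eSingle_of_ne _ _ hwx, sub_zero]

theorem eSingle_mul_self_of_lt {x y : X} (hxy : x < y) :
    eSingle K x y hxy.le * eSingle K x y hxy.le = 0 :=
  eSingle_mul_eSingle_of_ne _ _ hxy.ne'

theorem isUnit_one_add_eSingle {x y : X} (hxy : x < y) : IsUnit (1 + eSingle K x y hxy.le) :=
  IsNilpotent.isUnit_one_add ⟨2, by rw [sq, eSingle_mul_self_of_lt hxy]⟩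

end MatrixUnits

section InnerAutomorphism

variable {K : Type*} [Field K] {X : Type*} [PartialOrder X] [DecidableEq X] [LocallyFiniteOrder X]

theorem exists_lieEquiv_coe_eq_xiMap {β : IncidenceAlgebra K X} (hβ : IsUnit β) :
    ∃ e : IncidenceAlgebra K X ≃ₗ⁅K⁆ IncidenceAlgebra K X, ⇑e = xiMap β := by
  obtain ⟨u, rfl⟩ := hβ
  refine ⟨(MulSemiringAction.toAlgEquiv K _ (ConjAct.toConjAct u)).toLieEquiv, funext fun f ↦ ?_⟩
  rw [AlgEquiv.toLieEquiv_apply, MulSemiringAction.toAlgEquiv_apply, ConjAct.units_smul_def,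
    ConjAct.ofConjAct_toConjAct, xiMap, Ring.inverse_unit]

theorem xiMap_one_add_eSingle_eSingle_self {x y : X} (hxy : x < y) :
    xiMap (1 + eSingle K x y hxy.le) (eSingle K y y le_rfl) =
      eSingle K y y le_rfl + eSingle K x y hxy.le := by
  have sq_zero := eSingle_mul_self_of_lt (K := K) hxy
  calc xiMap (1 + eSingle K x y hxy.le) (eSingle K y y le_rfl)
      = (1 + eSingle K x y hxy.le) * eSingle K y y le_rfl * (1 - eSingle K x y hxy.le) := by
        rw [xiMap, ringInverse_one_add_of_mul_self_eq_zero sq_zero]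
    _ = (eSingle K y y le_rfl + eSingle K x y hxy.le) * (1 - eSingle K x y hxy.le) := by
        rw [add_mul, one_mul, eSingle_mul_eSingle]
    _ = eSingle K y y le_rfl + eSingle K x y hxy.le := by
        rw [mul_sub, mul_one, add_mul, sq_zero, eSingle_mul_eSingle_of_ne _ _ hxy.ne', add_zero,
          sub_zero]

theorem homJacobi_sum_xiMap_one_add_eSingle {u x y : X} (hux : u < x) (hxy : x < y) :
    ⁅⁅eSingle K y y le_rfl, eSingle K u u le_rfl⁆,
        xiMap (1 + eSingle K x y hxy.le) (eSingle K u x hux.le)⁆ +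
      ⁅⁅eSingle K u u le_rfl, eSingle K u x hux.le⁆,
        xiMap (1 + eSingle K x y hxy.le) (eSingle K y y le_rfl)⁆ +
      ⁅⁅eSingle K u x hux.le, eSingle K y y le_rfl⁆,
        xiMap (1 + eSingle K x y hxy.le) (eSingle K u u le_rfl)⁆ =
      eSingle K u y (hux.le.trans hxy.le) := by
  have huy := hux.trans hxy
  have lie_ey_eu : ⁅eSingle K y y le_rfl, eSingle K u u le_rfl⁆ = 0 :=
    lie_eSingle_eSingle_of_ne _ _ huy.ne' huy.ne
  have lie_eux_ey : ⁅eSingle K u x hux.le, eSingle K y y le_rfl⁆ = 0 :=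
    lie_eSingle_eSingle_of_ne _ _ hxy.ne huy.ne'
  rw [lie_ey_eu, lie_eux_ey, zero_lie, zero_lie, zero_add, add_zero,
    lie_eSingle_eSingle _ _ hux.ne, xiMap_one_add_eSingle_eSingle_self hxy, lie_add, lie_eux_ey,
    zero_add, lie_eSingle_eSingle _ _ huy.ne]

theorem not_homJacobi_xiMap_one_add_eSingle {x y : X} (hxy : x < y) (hx : ¬IsMin x) :
    ¬HomJacobi (xiMap (1 + eSingle K x y hxy.le)) := by
  intro hJacobi
  obtain ⟨u, hux⟩ := not_isMin_iff.1 hx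
  exact eSingle_ne_zero (hux.le.trans hxy.le)
    ((homJacobi_sum_xiMap_one_add_eSingle hux hxy).symm.trans (hJacobi _ _ _))

end InnerAutomorphism

theorem stmt6_general {K : Type*} [Field K] {X : Type*} [PartialOrder X] [DecidableEq X]
    [LocallyFiniteOrder X] {x y : X} (hxy : x < y) (hx : ¬IsMin x) :
    IsUnit (1 + eSingle K x y hxy.le) ∧
    (∃ e : IncidenceAlgebra K X ≃ₗ⁅K⁆ IncidenceAlgebra K X,
        ⇑e = xiMap (1 + eSingle K x y hxy.le)) ∧
    ¬HomJacobi (xiMap (1 + eSingle K x y hxy.le)) ∧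
    ∀ u : X, ∀ hu : u < x,
      ⁅⁅eSingle K y y le_rfl, eSingle K u u le_rfl⁆,
          xiMap (1 + eSingle K x y hxy.le) (eSingle K u x hu.le)⁆ +
      ⁅⁅eSingle K u u le_rfl, eSingle K u x hu.le⁆,
          xiMap (1 + eSingle K x y hxy.le) (eSingle K y y le_rfl)⁆ +
      ⁅⁅eSingle K u x hu.le, eSingle K y y le_rfl⁆,
          xiMap (1 + eSingle K x y hxy.le) (eSingle K u u le_rfl)⁆ =
        eSingle K u y (hu.le.trans hxy.le) ∧
      eSingle K u y (hu.le.trans hxy.le) ≠ 0 :=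
  ⟨isUnit_one_add_eSingle hxy, exists_lieEquiv_coe_eq_xiMap (isUnit_one_add_eSingle hxy),
    not_homJacobi_xiMap_one_add_eSingle hxy hx,
    fun _ hu ↦ ⟨homJacobi_sum_xiMap_one_add_eSingle hu hxy, eSingle_ne_zero _⟩⟩

theorem stmt6 {K : Type*} [Field K] {X : Type*} [PartialOrder X] [Fintype X] [DecidableEq X]
    [LocallyFiniteOrder X]
    (hcard : 1 < Fintype.card X)
    (hconn : ∀ x y : X, Relation.ReflTransGen (fun a b : X => a ≤ b ∨ b ≤ a) x y)
    (hlen : ∃ a b c : X, a < b ∧ b < c)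
    {x y : X} (hxy : x < y) (hx : ¬IsMin x) :
    IsUnit (1 + eSingle K x y hxy.le) ∧
    (∃ e : IncidenceAlgebra K X ≃ₗ⁅K⁆ IncidenceAlgebra K X,
        ⇑e = xiMap (1 + eSingle K x y hxy.le)) ∧
    ¬HomJacobi (xiMap (1 + eSingle K x y hxy.le)) ∧
    ∀ u : X, ∀ hu : u < x,
      ⁅⁅eSingle K y y le_rfl, eSingle K u u le_rfl⁆,
          xiMap (1 + eSingle K x y hxy.le) (eSingle K u x hu.le)⁆ +
      ⁅⁅eSingle K u u le_rfl, eSingle K u x hu.le⁆,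
          xiMap (1 + eSingle K x y hxy.le) (eSingle K y y le_rfl)⁆ +
      ⁅⁅eSingle K u x hu.le, eSingle K y y le_rfl⁆,
          xiMap (1 + eSingle K x y hxy.le) (eSingle K u u le_rfl)⁆ =
        eSingle K u y (hu.le.trans hxy.le) ∧
      eSingle K u y (hu.le.trans hxy.le) ≠ 0 :=
  stmt6_general hxy hx
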